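/- arXiv:math/9412219 — 4 statements merged into one kernel-verified Lean document; each statement's English description precedes it below -/
import Mathlib

section
/- Let X be a real Banach space, F a norming subspace of X*, and σ the σ(X,F) topology. Then the following are equivalent: (a) every nonempty σ-closed, norm-bounded, convex set in X is the σ-closed convex hull of its set of farthest points; (b) X has the F-MIP and every nonempty σ-closed, norm-bounded, convex set in X has Property (R). -/
open Metric Set Pointwise

/-- The farthest distance map `r_K(x) = sup {‖z - x‖ : z ∈ K}`. -/
noncomputable def rFar {X : Type*} [NormedAddCommGroup X] (K : Set X) (x : X) : ℝ :=
  sSup ((fun z => ‖z - x‖) '' K)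

/-- `Q_K(x)`: the set of points of `K` farthest from `x`. -/
def QFar {X : Type*} [NormedAddCommGroup X] (K : Set X) (x : X) : Set X :=
  {z ∈ K | ‖z - x‖ = rFar K x}

/-- `D(K)`: the set of points admitting a farthest point in `K`. -/
def DFar {X : Type*} [NormedAddCommGroup X] (K : Set X) : Set X :=
  {x | (QFar K x).Nonempty}

/-- `b(K)`: the set of farthest points of `K`. -/
def farPoints {X : Type*} [NormedAddCommGroup X] (K : Set X) : Set X :=
  ⋃ x ∈ DFar K, QFar K x

/-- The crescent `C(K, x, α) = {z ∈ K : ‖z - x‖ > r_K(x) - α}`. -/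
def crescent {X : Type*} [NormedAddCommGroup X] (K : Set X) (x : X) (α : ℝ) : Set X :=
  {z ∈ K | rFar K x - α < ‖z - x‖}

/-- Property (R): every crescent of `K` contains a farthest point of `K`. -/
def PropR {X : Type*} [NormedAddCommGroup X] (K : Set X) : Prop :=
  ∀ (x : X) (α : ℝ), 0 < α → ∃ z ∈ crescent K x α, z ∈ farPoints K

/-- A set is admissible if it is the intersection of all closed balls containing it. -/
def Admissible {X : Type*} [NormedAddCommGroup X] (K : Set X) : Prop :=
  K = ⋂ p ∈ {p : X × ℝ | K ⊆ closedBall p.1 p.2}, closedBall p.1 p.2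

/-- The `σ(X,F)` topology on `X`: the topology induced by the functionals in `F`. -/
def sigmaTop {X : Type*} [NormedAddCommGroup X] [NormedSpace ℝ X]
    (F : Submodule ℝ (X →L[ℝ] ℝ)) : TopologicalSpace X :=
  TopologicalSpace.induced (fun x => fun f : F => (f : X →L[ℝ] ℝ) x) inferInstance

/-- `F` is a norming subspace of `X*`: `‖x‖ = sup {|f x| : f ∈ F, ‖f‖ ≤ 1}`. -/
def IsNorming {X : Type*} [NormedAddCommGroup X] [NormedSpace ℝ X]
    (F : Submodule ℝ (X →L[ℝ] ℝ)) : Prop :=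
  ∀ x : X, ‖x‖ = sSup {r : ℝ | ∃ f ∈ F, ‖f‖ ≤ 1 ∧ r = |f x|}

section gen
variable {E G : Type*} [AddCommGroup E] [Module ℝ E] [AddCommGroup G] [Module ℝ G]

theorem gen_closure_convex (B : E →ₗ[ℝ] G →ₗ[ℝ] ℝ) (s : Set E) (hs : Convex ℝ s) :
    Convex ℝ (E := E) (closure (X := WeakBilin B) s) := by
  have h : Convex ℝ (closure (X := WeakBilin B) s) :=
    Convex.closure (E := WeakBilin B) (𝕜 := ℝ) hs
  exact h

theorem gen_sep (B : E →ₗ[ℝ] G →ₗ[ℝ] ℝ) (s : Set E) (hs : Convex ℝ s)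
    (hc : IsClosed (X := WeakBilin B) s) (x : E) (hx : x ∉ s) :
    ∃ y : G, ∃ u : ℝ, (∀ a ∈ s, B a y < u) ∧ u < B x y := by
  obtain ⟨g, u, h1, h2⟩ := geometric_hahn_banach_closed_point (E := WeakBilin B)
    (s := s) (x := x) hs hc hx
  obtain ⟨y, rfl⟩ := LinearMap.dualEmbedding_surjective B g
  exact ⟨y, u, h1, h2⟩

end gen

/-- The pairing between `X` and `F`. -/
def pairXF {X : Type*} [NormedAddCommGroup X] [NormedSpace ℝ X]
    (F : Submodule ℝ (X →L[ℝ] ℝ)) : X →ₗ[ℝ] F →ₗ[ℝ] ℝ :=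
  LinearMap.mk₂ ℝ (fun x f => (f : X →L[ℝ] ℝ) x)
    (by intros; simp) (by intros; simp) (by intros; simp) (by intros; simp)

section aux
variable {X : Type*} [NormedAddCommGroup X] [NormedSpace ℝ X]

theorem sig_eval_cont (F : Submodule ℝ (X →L[ℝ] ℝ)) (f : X →L[ℝ] ℝ) (hf : f ∈ F) :
    @Continuous X ℝ (sigmaTop F) _ f :=
  WeakBilin.eval_continuous (pairXF F) ⟨f, hf⟩

theorem sig_closure_convex (F : Submodule ℝ (X →L[ℝ] ℝ)) (s : Set X) (hs : Convex ℝ s) :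
    Convex ℝ (@closure X (sigmaTop F) s) := by
  exact gen_closure_convex (E := X) (G := F) (pairXF F) s hs

theorem sig_sep (F : Submodule ℝ (X →L[ℝ] ℝ)) (s : Set X) (hs : Convex ℝ s)
    (hc : @IsClosed X (sigmaTop F) s) (x : X) (hx : x ∉ s) :
    ∃ f ∈ F, ∃ u : ℝ, (∀ a ∈ s, f a < u) ∧ u < f x := by
  have key := gen_sep (E := X) (G := F) (pairXF F) s hs
  obtain ⟨y, u, h1, h2⟩ := key hc x hx
  exact ⟨y.1, y.2, u, h1, h2⟩

theorem norming_le {F : Submodule ℝ (X →L[ℝ] ℝ)} (hF : IsNorming F) (y : X) (C : ℝ) :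
    ‖y‖ ≤ C ↔ ∀ g ∈ F, ‖g‖ ≤ 1 → |g y| ≤ C := by
  constructor
  · intro h g _ hg1
    have h1 := g.le_opNorm y
    rw [Real.norm_eq_abs] at h1
    nlinarith [norm_nonneg y]
  · intro h
    rw [hF y]
    refine csSup_le ⟨0, 0, F.zero_mem, by simp, by simp⟩ ?_
    rintro r ⟨g, hg, hg1, rfl⟩
    exact h g hg hg1

theorem sig_closed_norm {F : Submodule ℝ (X →L[ℝ] ℝ)} (hF : IsNorming F) (T : X → X) (h : X → ℝ)
    (hT : ∀ g ∈ F, @Continuous X ℝ (sigmaTop F) _ (fun z => g (T z)))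
    (hh : @Continuous X ℝ (sigmaTop F) _ h) :
    @IsClosed X (sigmaTop F) {z | ‖T z‖ ≤ h z} := by
  have : {z | ‖T z‖ ≤ h z} = ⋂ g ∈ {g : X →L[ℝ] ℝ | g ∈ F ∧ ‖g‖ ≤ 1}, {z | |g (T z)| ≤ h z} := by
    ext z
    simp only [mem_setOf_eq, mem_iInter]
    rw [norming_le hF]
    exact ⟨fun H g hg => H g hg.1 hg.2, fun H g h1 h2 => H g ⟨h1, h2⟩⟩
  rw [this]
  letI := sigmaTop F
  exact isClosed_biInter fun g hg => isClosed_le (hT g hg.1).abs hh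

theorem sig_closed_ball {F : Submodule ℝ (X →L[ℝ] ℝ)} (hF : IsNorming F) (p : X) (r : ℝ) :
    @IsClosed X (sigmaTop F) (closedBall p r) := by
  letI := sigmaTop F
  have := sig_closed_norm hF (fun z => z - p) (fun _ => r)
    (fun g hg => by
      simp only [map_sub]
      exact (sig_eval_cont F g hg).sub continuous_const) continuous_const
  convert this using 1
  ext z
  simp [dist_eq_norm]

theorem far_bdd {K : Set X} (hK : Bornology.IsBounded K) (p : X) :
    BddAbove ((fun z => ‖z - p‖) '' K) := by
  obtain ⟨R, hR⟩ := hK.exists_norm_le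
  refine ⟨R + ‖p‖, ?_⟩
  rintro _ ⟨z, hz, rfl⟩
  exact (norm_sub_le _ _).trans (by simpa using hR z hz)

theorem le_rFar {K : Set X} (hK : Bornology.IsBounded K) (p : X) {z : X} (hz : z ∈ K) :
    ‖z - p‖ ≤ rFar K p :=
  le_csSup (far_bdd hK p) ⟨z, hz, rfl⟩

theorem mem_farPoints {K : Set X} {z : X} :
    z ∈ farPoints K ↔ z ∈ K ∧ ∃ p, ‖z - p‖ = rFar K p := by
  simp only [farPoints, DFar, mem_iUnion, QFar, mem_setOf_eq, exists_prop]
  constructor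
  · rintro ⟨p, _, h1, h2⟩
    exact ⟨h1, p, h2⟩
  · rintro ⟨h1, p, h2⟩
    exact ⟨p, ⟨z, h1, h2⟩, h1, h2⟩

/-- The main separation step: a ball containing `K` and missing `x0`. -/
theorem ball_sep {F : Submodule ℝ (X →L[ℝ] ℝ)} (hF : IsNorming F)
    (H : ∀ K : Set X, K.Nonempty → @IsClosed X (sigmaTop F) K → Bornology.IsBounded K →
        Convex ℝ K → K = @closure X (sigmaTop F) (convexHull ℝ (farPoints K)))
    (K : Set X) (hc : @IsClosed X (sigmaTop F) K) (hb : Bornology.IsBounded K)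
    (hconv : Convex ℝ K) (x0 : X) (hx0 : x0 ∉ K) :
    ∃ p r, K ⊆ closedBall p r ∧ r < ‖x0 - p‖ := by
  obtain ⟨f, hf, u, hu, hux⟩ := sig_sep F K hconv hc x0 hx0
  obtain ⟨R0, hR0⟩ := hb.exists_norm_le
  obtain ⟨c, huc, hcx⟩ := exists_between hux
  set ε : ℝ := (c - u) / (‖f‖ + 1) with hε
  have hfpos : 0 < ‖f‖ + 1 := by positivity
  have hεpos : 0 < ε := div_pos (by linarith) hfpos
  have hεf : ‖f‖ * ε ≤ c - u := by
    have : (‖f‖ + 1) * ε = c - u := by rw [hε]; field_simp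
    nlinarith
  set R : ℝ := max (R0 + ε) ‖x0‖ with hR
  have hR1 : R0 + ε ≤ R := le_max_left _ _
  have hR2 : ‖x0‖ ≤ R := le_max_right _ _
  set d : ℝ := f x0 - c with hd
  have hdpos : 0 < d := by linarith
  set T : X → X := fun z => (f x0 - f z) • x0 + d • (z - x0) with hT
  set M : Set X := closedBall 0 R ∩ {z | ‖T z‖ ≤ (f x0 - f z) * R} with hM
  have hMc : @IsClosed X (sigmaTop F) M := by
    letI := sigmaTop F
    refine IsClosed.inter (sig_closed_ball hF 0 R) (sig_closed_norm hF _ _ ?_ ?_)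
    · intro g hg
      have h1 := sig_eval_cont F g hg
      have h2 := sig_eval_cont F f hf
      simp only [hT, map_add, map_smul, map_sub, smul_eq_mul]
      exact ((continuous_const.sub h2).mul continuous_const).add
        (continuous_const.mul (h1.sub continuous_const))
    · exact (continuous_const.sub (sig_eval_cont F f hf)).mul continuous_const
  have hMb : Bornology.IsBounded M := isBounded_closedBall.subset inter_subset_left
  have hMconv : Convex ℝ M := by
    refine (convex_closedBall _ _).inter ?_
    intro y hy z hz a b ha hb hab
    simp only [mem_setOf_eq] at hy hz ⊢
    have e : T (a • y + b • z) = a • T y + b • T z := by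
      have hb' : b = 1 - a := by linarith
      subst hb'
      simp only [hT, map_add, map_smul, smul_eq_mul]
      module
    have e2 : f x0 - f (a • y + b • z) = a * (f x0 - f y) + b * (f x0 - f z) := by
      have hb' : b = 1 - a := by linarith
      subst hb'
      simp only [map_add, map_smul, smul_eq_mul]
      ring
    rw [e, e2]
    calc ‖a • T y + b • T z‖ ≤ a * ‖T y‖ + b * ‖T z‖ := by
          refine (norm_add_le _ _).trans ?_
          rw [norm_smul, norm_smul, Real.norm_of_nonneg ha, Real.norm_of_nonneg hb]
      _ ≤ a * ((f x0 - f y) * R) + b * ((f x0 - f z) * R) := by gcongr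
      _ = _ := by ring
  have hx0M : x0 ∈ M := by
    refine ⟨by simpa using hR2, ?_⟩
    simp [hT]
  have hsub : ∀ z, ‖z‖ ≤ R → f z ≤ c → z ∈ M := by
    intro z hz hfz
    refine ⟨by simpa using hz, ?_⟩
    simp only [mem_setOf_eq]
    have e : T z = (c - f z) • x0 + d • z := by
      simp only [hT, hd]; module
    rw [e]
    calc ‖(c - f z) • x0 + d • z‖ ≤ (c - f z) * ‖x0‖ + d * ‖z‖ := by
          refine (norm_add_le _ _).trans ?_
          rw [norm_smul, norm_smul, Real.norm_of_nonneg (by linarith : 0 ≤ c - f z),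
            Real.norm_of_nonneg hdpos.le]
      _ ≤ (c - f z) * R + d * R := by
          have : 0 ≤ c - f z := by linarith
          gcongr
      _ = _ := by rw [hd]; ring
  have hMeq := H M ⟨x0, hx0M⟩ hMc hMb hMconv
  have hex : ∃ z ∈ farPoints M, c < f z := by
    by_contra hcon
    push Not at hcon
    have : M ⊆ {z | f z ≤ c} := by
      rw [hMeq]
      letI := sigmaTop F
      refine closure_minimal (convexHull_min hcon ?_)
        (isClosed_le (sig_eval_cont F f hf) continuous_const)
      exact convex_halfSpace_le f.isLinear c
    exact absurd (this hx0M) (not_le.2 hcx)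
  obtain ⟨z, hz, hfz⟩ := hex
  obtain ⟨hzM, p, hp⟩ := mem_farPoints.1 hz
  -- `x0` is at least as far from `p` as all of `M`
  have hfar : rFar M p ≤ ‖x0 - p‖ := by
    have hTz : ‖T z‖ ≤ (f x0 - f z) * R := hzM.2
    have hRnn : 0 ≤ R := (norm_nonneg _).trans hR2
    rcases le_or_gt (f x0 - f z) 0 with hs | hs
    · have h0 : T z = 0 := by
        have : ‖T z‖ ≤ 0 := hTz.trans (mul_nonpos_of_nonpos_of_nonneg hs hRnn)
        simpa using this
      by_cases hs0 : f x0 - f z = 0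
      · have : z = x0 := by
          simp only [hT, hs0, zero_smul, zero_add, smul_eq_zero, hdpos.ne', false_or] at h0
          exact sub_eq_zero.1 h0
        rw [← hp, this]
      · -- then `R = 0`, all of `M` is `{0}`
        have hR0' : R = 0 := by
          have h1 : 0 ≤ (f x0 - f z) * R := (norm_nonneg _).trans hTz
          have h2 : f x0 - f z < 0 := lt_of_le_of_ne hs hs0
          nlinarith
        have hz0 : z = 0 := by
          have := hzM.1
          simpa [hR0'] using this
        have hx00 : x0 = 0 := by
          rw [hR0'] at hR2
          simpa using hR2
        rw [← hp, hz0, hx00]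
    · set s : ℝ := (f x0 - f z) / d with hsdef
      have hspos : 0 < s := div_pos hs hdpos
      have hs1 : s < 1 := by rw [hsdef, div_lt_one hdpos]; linarith
      have hsd : s * d = f x0 - f z := by rw [hsdef]; field_simp
      set k : X := x0 + s⁻¹ • (z - x0) with hk
      have hzk : z = (1 - s) • x0 + s • k := by
        rw [hk, smul_add, smul_smul, mul_inv_cancel₀ hspos.ne']
        module
      have hfk : f k = c := by
        have h1 : f z = (1 - s) * f x0 + s * f k := by
          conv_lhs => rw [hzk]
          simp
        have : s * (f k - c) = 0 := by rw [hd] at hsd; linarith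
        rcases mul_eq_zero.1 this with h | h
        · exact absurd h hspos.ne'
        · linarith
      have hTk : T z = (s * d) • k := by
        simp only [hT]
        rw [← hsd]
        conv_lhs => rw [hzk]
        module
      have hkR : ‖k‖ ≤ R := by
        have hpos : 0 < s * d := mul_pos hspos hdpos
        rw [hTk, norm_smul, Real.norm_of_nonneg hpos.le, ← hsd] at hTz
        exact le_of_mul_le_mul_left hTz hpos
      have hkM := hsub k hkR hfk.le
      have h1 := le_rFar hMb p hkM
      have h2 : ‖z - p‖ ≤ (1 - s) * ‖x0 - p‖ + s * ‖k - p‖ := by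
        have e : z - p = (1 - s) • (x0 - p) + s • (k - p) := by
          conv_lhs => rw [hzk]
          module
        rw [e]
        refine (norm_add_le _ _).trans ?_
        rw [norm_smul, norm_smul, Real.norm_of_nonneg (by linarith : 0 ≤ 1 - s),
          Real.norm_of_nonneg hspos.le]
      rw [hp] at h2
      nlinarith
  refine ⟨p, ‖x0 - p‖ - ε, ?_, by linarith⟩
  intro k hk
  rw [mem_closedBall, dist_eq_norm]
  -- any `ε`-perturbation of `k` lies in `M`
  have hpert : ∀ v : X, ‖v‖ = 1 → ‖(k - p) + ε • v‖ ≤ ‖x0 - p‖ := by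
    intro v hv
    have hkv : k + ε • v ∈ M := by
      apply hsub
      · refine (norm_add_le _ _).trans ?_
        rw [norm_smul, hv, Real.norm_of_nonneg hεpos.le]
        have := hR0 k hk
        linarith
      · have h1 := f.le_opNorm (ε • v)
        rw [norm_smul, hv, Real.norm_of_nonneg hεpos.le, mul_one, Real.norm_eq_abs] at h1
        have h2 := le_abs_self (f (ε • v))
        have h3 := hu k hk
        rw [map_add]
        linarith
    have := (le_rFar hMb p hkv).trans hfar
    rwa [show (k - p) + ε • v = k + ε • v - p by abel]
  by_cases hkp : k = p
  · have hne : x0 - p ≠ 0 := by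
      intro h
      apply hx0
      rw [sub_eq_zero.1 h, ← hkp]
      exact hk
    have h1 := hpert (‖x0 - p‖⁻¹ • (x0 - p)) (norm_smul_inv_norm (𝕜 := ℝ) hne)
    have hv : ‖‖x0 - p‖⁻¹ • (x0 - p)‖ = 1 := norm_smul_inv_norm (𝕜 := ℝ) hne
    rw [hkp, sub_self, zero_add, norm_smul, hv, Real.norm_of_nonneg hεpos.le] at h1
    rw [hkp, sub_self, norm_zero]
    linarith
  · have hne : k - p ≠ 0 := sub_ne_zero.2 hkp
    have hnp : 0 < ‖k - p‖ := norm_pos_iff.2 hne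
    have h1 := hpert (‖k - p‖⁻¹ • (k - p)) (norm_smul_inv_norm (𝕜 := ℝ) hne)
    have e : (k - p) + ε • (‖k - p‖⁻¹ • (k - p)) = (1 + ε * ‖k - p‖⁻¹) • (k - p) := by module
    rw [e, norm_smul, Real.norm_of_nonneg (by positivity)] at h1
    have : (1 + ε * ‖k - p‖⁻¹) * ‖k - p‖ = ‖k - p‖ + ε := by field_simp
    linarith

end aux

/-- Theorem far: every nonempty σ-closed bounded convex set is the σ-closed convex hull of
its farthest points iff `X` has the `F`-MIP and every such set has Property (R). -/
theorem stmt_2 {X : Type*} [NormedAddCommGroup X] [NormedSpace ℝ X] [CompleteSpace X]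
    (F : Submodule ℝ (X →L[ℝ] ℝ)) (hF : IsNorming F) :
    (∀ K : Set X, K.Nonempty → @IsClosed X (sigmaTop F) K → Bornology.IsBounded K →
        Convex ℝ K → K = @closure X (sigmaTop F) (convexHull ℝ (farPoints K))) ↔
    ((∀ K : Set X, @IsClosed X (sigmaTop F) K → Bornology.IsBounded K → Convex ℝ K →
        Admissible K) ∧
     (∀ K : Set X, K.Nonempty → @IsClosed X (sigmaTop F) K → Bornology.IsBounded K →
        Convex ℝ K → PropR K)) := by
  constructor
  · intro H
    refine ⟨?_, ?_⟩
    · intro K hc hb hconv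
      refine Subset.antisymm (subset_iInter₂ fun p hp => hp) ?_
      intro x0 hx0
      by_contra hx
      obtain ⟨p, r, h1, h2⟩ := ball_sep hF H K hc hb hconv x0 hx
      have := mem_iInter₂.1 hx0 (p, r) h1
      rw [mem_closedBall, dist_eq_norm] at this
      exact absurd this (not_le.2 h2)
    · intro K hne hc hb hconv x α hα
      by_contra hcon
      push Not at hcon
      have hsub : K ⊆ closedBall x (rFar K x - α) := by
        refine (H K hne hc hb hconv).subset.trans ?_
        letI := sigmaTop F
        refine closure_minimal (convexHull_min ?_ (convex_closedBall _ _)) (sig_closed_ball hF _ _)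
        intro z hz
        rw [mem_closedBall, dist_eq_norm]
        by_contra hlt
        exact hcon z ⟨(mem_farPoints.1 hz).1, not_le.1 hlt⟩ hz
      have : rFar K x ≤ rFar K x - α := by
        refine csSup_le (hne.image _) ?_
        rintro _ ⟨z, hz, rfl⟩
        have := hsub hz
        rwa [mem_closedBall, dist_eq_norm] at this
      linarith
  · rintro ⟨H1, H2⟩ K hne hc hb hconv
    have hLK : @closure X (sigmaTop F) (convexHull ℝ (farPoints K)) ⊆ K := by
      letI := sigmaTop F
      exact closure_minimal (convexHull_min (fun z hz => (mem_farPoints.1 hz).1) hconv) hc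
    refine Subset.antisymm ?_ hLK
    intro x0 hx0
    have hadm := H1 (@closure X (sigmaTop F) (convexHull ℝ (farPoints K)))
      (@isClosed_closure X (sigmaTop F) _) (hb.subset hLK)
      (sig_closure_convex F _ (convex_convexHull ℝ _))
    rw [hadm]
    refine mem_iInter₂.2 ?_
    rintro ⟨p, r⟩ hp
    by_contra hx
    rw [mem_closedBall, dist_eq_norm, not_le] at hx
    have hr := le_rFar hb p hx0
    obtain ⟨z, hz1, hz2⟩ := H2 K hne hc hb hconv p (rFar K p - r) (by simp only at hx; linarith)
    have hzL : z ∈ @closure X (sigmaTop F) (convexHull ℝ (farPoints K)) :=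
      @subset_closure X (sigmaTop F) _ _ (subset_convexHull ℝ _ hz2)
    have h1 := hp hzL
    have h2 := hz1.2
    rw [mem_closedBall, dist_eq_norm] at h1
    simp only at h1
    linarith
end

section
/- Let X be a real Banach space and let K ⊆ X be a nonempty weakly compact set. Then K is almost remotal: the set D(K) = {x ∈ X : Q_K(x) ≠ ∅} contains a dense Gδ subset of X. -/
open Metric Set Pointwise

/-- The weak topology `σ(X, X*)` on `X`. -/
def weakTop (X : Type*) [NormedAddCommGroup X] [NormedSpace ℝ X] : TopologicalSpace X :=
  TopologicalSpace.induced (fun x => fun f : X →L[ℝ] ℝ => f x) inferInstance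

theorem weak_cont {X : Type*} [NormedAddCommGroup X] [NormedSpace ℝ X] (f : X →L[ℝ] ℝ) :
    @Continuous X ℝ (weakTop X) _ (fun x => f x) :=
  @Continuous.comp X ((X →L[ℝ] ℝ) → ℝ) ℝ (weakTop X) _ _ (fun x => fun f : X →L[ℝ] ℝ => f x)
    (fun p => p f) (continuous_apply (A := fun _ : X →L[ℝ] ℝ => ℝ) f) continuous_induced_dom

theorem far_bdd_s7 {X : Type*} [NormedAddCommGroup X] [NormedSpace ℝ X]
    (K : Set X) (hK : @IsCompact X (weakTop X) K) : ∃ C, ∀ z ∈ K, ‖z‖ ≤ C := by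
  have hcont : ∀ f : X →L[ℝ] ℝ, @Continuous X ℝ (weakTop X) _ (fun x => f x) := weak_cont
  obtain ⟨C, hC⟩ := banach_steinhaus (ι := K)
    (g := fun z => NormedSpace.inclusionInDoubleDual ℝ X z.1) (by
      intro f
      have h1 : IsCompact ((fun x => f x) '' K) :=
        @IsCompact.image X ℝ (weakTop X) _ K _ hK (hcont f)
      obtain ⟨C, hC⟩ := h1.isBounded.exists_norm_le
      exact ⟨C, fun i => hC _ ⟨i.1, i.2, rfl⟩⟩)
  refine ⟨C, fun z hz => ?_⟩
  have h2 := hC ⟨z, hz⟩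
  have h3 : ‖NormedSpace.inclusionInDoubleDual ℝ X z‖ = ‖z‖ :=
    (NormedSpace.inclusionInDoubleDualLi ℝ (E := X)).norm_map z
  simpa [h3] using h2

theorem far_le {X : Type*} [NormedAddCommGroup X] {K : Set X} {C : ℝ}
    (hC : ∀ z ∈ K, ‖z‖ ≤ C) (x : X) {z : X} (hz : z ∈ K) : ‖z - x‖ ≤ rFar K x := by
  refine le_csSup ⟨C + ‖x‖, ?_⟩ ⟨z, hz, rfl⟩
  rintro _ ⟨w, hw, rfl⟩
  exact (norm_sub_le _ _).trans (by linarith [hC w hw])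

theorem far_le_of {X : Type*} [NormedAddCommGroup X] {K : Set X} (hne : K.Nonempty) {x : X} {a : ℝ}
    (h : ∀ z ∈ K, ‖z - x‖ ≤ a) : rFar K x ≤ a := by
  refine csSup_le (hne.image _) ?_
  rintro _ ⟨w, hw, rfl⟩
  exact h w hw

theorem far_lip {X : Type*} [NormedAddCommGroup X] {K : Set X} {C : ℝ}
    (hne : K.Nonempty) (hC : ∀ z ∈ K, ‖z‖ ≤ C) (x y : X) : rFar K x ≤ rFar K y + ‖x - y‖ := by
  refine far_le_of hne fun z hz => ?_
  have h1 := far_le hC y hz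
  have h2 := norm_sub_le (z - y) (x - y)
  rw [sub_sub_sub_cancel_right] at h2
  linarith

theorem far_convex {X : Type*} [NormedAddCommGroup X] [NormedSpace ℝ X] {K : Set X} {C : ℝ}
    (hne : K.Nonempty) (hC : ∀ z ∈ K, ‖z‖ ≤ C) : ConvexOn ℝ univ (rFar K) := by
  refine ⟨convex_univ, fun x _ y _ a b ha hb hab => far_le_of hne fun z hz => ?_⟩
  have h : z - (a • x + b • y) = a • (z - x) + b • (z - y) := by
    have : z = a • z + b • z := by rw [← add_smul, hab, one_smul]
    nth_rewrite 1 [this]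
    module
  rw [h]
  refine (norm_add_le _ _).trans ?_
  rw [norm_smul, norm_smul, Real.norm_of_nonneg ha, Real.norm_of_nonneg hb]
  simp only [smul_eq_mul]
  gcongr
  · exact far_le hC x hz
  · exact far_le hC y hz

theorem far_subgrad {X : Type*} [NormedAddCommGroup X] [NormedSpace ℝ X] {r : X → ℝ}
    (hr : ConvexOn ℝ univ r) (hc : Continuous r) (x : X) :
    ∃ f : X →L[ℝ] ℝ, ∀ y, f (y - x) ≤ r y - r x := by
  obtain ⟨F, hF⟩ := geometric_hahn_banach_point_open (x := (x, r x)) hr.convex_strict_epigraph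
    (by simpa using isOpen_lt (hc.comp continuous_fst) continuous_snd) (by simp)
  have hF' : ∀ y t, r y < t → F (x, r x) < F (y, t) := fun y t h => hF (y, t) ⟨mem_univ _, h⟩
  have hdec : ∀ y t, F (y, t) = F (y, 0) + t * F (0, 1) := by
    intro y t
    rw [← smul_eq_mul, ← map_smul, ← map_add]
    simp
  have hcpos : 0 < F (0, 1) := by
    have := hF' x (r x + 1) (by linarith)
    rw [hdec x (r x), hdec x (r x + 1)] at this
    linarith
  have hle : ∀ y, F (x, 0) + r x * F (0, 1) ≤ F (y, 0) + r y * F (0, 1) := by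
    intro y
    refine le_of_forall_pos_lt_add fun e he => ?_
    have := hF' y (r y + e / F (0, 1)) (by have := div_pos he hcpos; linarith)
    rw [hdec x (r x), hdec y, add_mul, div_mul_cancel₀ _ hcpos.ne'] at this
    linarith
  refine ⟨-((F (0, 1))⁻¹ • (F.comp (ContinuousLinearMap.inl ℝ X ℝ))), fun y => ?_⟩
  have h1 : F (y - x, 0) = F (y, 0) - F (x, 0) := by
    rw [← map_sub]; simp
  simp only [ContinuousLinearMap.neg_apply, ContinuousLinearMap.smul_apply,
    ContinuousLinearMap.comp_apply, ContinuousLinearMap.inl_apply, smul_eq_mul, h1]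
  rw [← mul_neg, inv_mul_le_iff₀ hcpos]
  nlinarith [hle y]

/-- The set of points all of whose subgradients nearly attain the farthest distance. -/
def goodSet {X : Type*} [NormedAddCommGroup X] [NormedSpace ℝ X] (K : Set X) (e : ℝ) : Set X :=
  {x | ∀ f : X →L[ℝ] ℝ, (∀ y, f (y - x) ≤ rFar K y - rFar K x) →
    ∃ z ∈ K, rFar K x - e < f (x - z)}

theorem subgrad_le {X : Type*} [NormedAddCommGroup X] [NormedSpace ℝ X] {K : Set X} {C : ℝ}
    (hne : K.Nonempty) (hC : ∀ z ∈ K, ‖z‖ ≤ C) {x : X} {f : X →L[ℝ] ℝ}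
    (hf : ∀ y, f (y - x) ≤ rFar K y - rFar K x) (v : X) : f v ≤ ‖v‖ := by
  have h1 := hf (x + v)
  have h2 := far_lip hne hC (x + v) x
  rw [add_sub_cancel_left] at h1 h2
  linarith

theorem good_dense {X : Type*} [NormedAddCommGroup X] [NormedSpace ℝ X] {K : Set X} {C : ℝ}
    (hne : K.Nonempty) (hC : ∀ z ∈ K, ‖z‖ ≤ C) {e : ℝ} (he : 0 < e) :
    Dense (interior (goodSet K e)) := by
  rw [Metric.dense_iff]
  intro y0 δ hδ
  have hR : 0 ≤ rFar K y0 := by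
    obtain ⟨z, hz⟩ := hne
    exact (norm_nonneg _).trans (far_le hC y0 hz)
  obtain ⟨l, hl0, hl1, hl2⟩ : ∃ l : ℝ, 0 < l ∧ l ≤ 1 ∧ l * (rFar K y0 + 1) ≤ δ / 2 := by
    refine ⟨min 1 (δ / 2 / (rFar K y0 + 1)), by positivity, min_le_left _ _, ?_⟩
    rw [← le_div_iff₀ (by positivity)]
    exact min_le_right _ _
  obtain ⟨ε, hε, hεl⟩ : ∃ ε : ℝ, 0 < ε ∧ 10 * ε = l * e := ⟨l * e / 10, by positivity, by ring⟩
  obtain ⟨z0, hz0, hd⟩ : ∃ z ∈ K, rFar K y0 - ε < ‖z - y0‖ := by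
    by_contra! h
    have := far_le_of hne h
    linarith
  have hdR := far_le hC y0 hz0
  have hd' : ‖y0 - z0‖ = ‖z0 - y0‖ := norm_sub_rev _ _
  set d := ‖z0 - y0‖ with hdd
  have hd0 : 0 ≤ d := norm_nonneg _
  refine ⟨y0 + l • (y0 - z0), ?_, ?_⟩
  · rw [Metric.mem_ball, dist_eq_norm, add_sub_cancel_left, norm_smul, hd',
      Real.norm_of_nonneg hl0.le]
    nlinarith
  rw [mem_interior]
  refine ⟨ball (y0 + l • (y0 - z0)) ε, ?_, isOpen_ball, mem_ball_self hε⟩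
  intro x hx f hf
  refine ⟨z0, hz0, ?_⟩
  rw [Metric.mem_ball, dist_eq_norm] at hx
  set y := y0 + l • (y0 - z0) with hy
  have hf1 := subgrad_le hne hC hf
  have hry : (1 + l) * d ≤ rFar K y := by
    have h := far_le hC y hz0
    have h2 : z0 - y = (1 + l) • (z0 - y0) := by rw [hy]; module
    rw [h2, norm_smul, Real.norm_of_nonneg (by linarith)] at h
    exact h
  have hlip1 := far_lip hne hC y x
  have hlip2 := far_lip hne hC x y
  have hlip3 := far_lip hne hC y y0
  rw [norm_sub_rev] at hlip1
  have hyy : ‖y - y0‖ = l * d := by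
    rw [hy, add_sub_cancel_left, norm_smul, hd', Real.norm_of_nonneg hl0.le]
  rw [hyy] at hlip3
  have h1 := hf y0
  have h2 := hf1 (x - y)
  have h3 := hf1 (y - x)
  rw [norm_sub_rev] at h3
  have e1 : f (y0 - x) = - (l * f (y0 - z0)) - f (x - y) := by
    rw [← smul_eq_mul, ← map_smul, ← map_neg, ← map_sub, hy]
    congr 1; module
  have e2 : f (x - z0) = (1 + l) * f (y0 - z0) - f (y - x) := by
    rw [← smul_eq_mul, ← map_smul, ← map_sub, hy]
    congr 1; module
  rw [e2]
  set a := f (y0 - z0)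
  have k1 : l * (d - a) ≤ 3 * ε := by nlinarith
  have k2 : l * ((1 + l) * (d - a)) ≤ 6 * ε := by nlinarith
  have k3 : l * ((1 + l) * (d - a) + 3 * ε) < l * e := by nlinarith
  have k4 := lt_of_mul_lt_mul_left k3 hl0.le
  nlinarith

/-- Lemma remotal (a) (Lau): any nonempty weakly compact set is almost remotal. -/
theorem stmt_7 {X : Type*} [NormedAddCommGroup X] [NormedSpace ℝ X] [CompleteSpace X]
    (K : Set X) (hne : K.Nonempty) (hK : @IsCompact X (weakTop X) K) :
    ∃ G : Set X, G ⊆ DFar K ∧ Dense G ∧ IsGδ G := by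
  obtain ⟨C, hC⟩ := far_bdd_s7 K hK
  have hcr : Continuous (rFar K) := by
    refine (LipschitzWith.of_le_add (f := rFar K) fun x y => ?_).continuous
    rw [dist_eq_norm]
    exact far_lip hne hC x y
  refine ⟨⋂ n : ℕ, interior (goodSet K (1 / ((n : ℝ) + 1))), ?_,
    dense_iInter_of_isOpen_nat (fun n => isOpen_interior)
      (fun n => good_dense hne hC Nat.one_div_pos_of_nat),
    IsGδ.iInter_of_isOpen fun n => isOpen_interior⟩
  intro x hx
  obtain ⟨f, hf⟩ := far_subgrad (far_convex hne hC) hcr x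
  have hf1 := subgrad_le hne hC hf
  have hcf : @Continuous X ℝ (weakTop X) _ (fun z => f z) := weak_cont f
  obtain ⟨z, hz, hmin⟩ := @IsCompact.exists_isMinOn ℝ X _ _ (weakTop X) _ K hK hne
    (fun z => f z) (@Continuous.continuousOn X ℝ (weakTop X) _ _ _ hcf)
  refine ⟨z, hz, le_antisymm (far_le hC x hz) ?_⟩
  refine le_of_forall_pos_lt_add fun e he => ?_
  obtain ⟨n, hn⟩ := exists_nat_one_div_lt he
  obtain ⟨w, hw, hlt⟩ := interior_subset (mem_iInter.1 hx n) f hf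
  have h1 : f z ≤ f w := hmin hw
  have h2 := hf1 (x - z)
  rw [norm_sub_rev] at h2
  rw [map_sub] at h2 hlt
  linarith
end

section
/- Let X be a real Banach space with the IP_{f,∞}, i.e., every family of closed balls in X with empty intersection contains a finite subfamily with empty intersection. Then X has the Mazur Intersection Property if and only if every nonempty norm-closed, bounded, convex set in X is the norm-closed convex hull of its set of farthest points. -/
open Metric Set Pointwise

section helpers
variable {X : Type*} [NormedAddCommGroup X]

theorem aux_bdd {K : Set X} (hK : Bornology.IsBounded K) (x : X) :
    BddAbove ((fun z => ‖z - x‖) '' K) := by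
  obtain ⟨c, hc⟩ := hK.subset_closedBall x
  refine ⟨c, ?_⟩
  rintro _ ⟨z, hz, rfl⟩
  simpa [mem_closedBall, dist_eq_norm] using hc hz

theorem aux_le {K : Set X} (hK : Bornology.IsBounded K) (x : X) {z : X} (hz : z ∈ K) :
    ‖z - x‖ ≤ rFar K x :=
  le_csSup (aux_bdd hK x) ⟨z, hz, rfl⟩

theorem aux_sup {K : Set X} (hne : K.Nonempty) (x : X) {c : ℝ} (h : ∀ z ∈ K, ‖z - x‖ ≤ c) :
    rFar K x ≤ c := by
  refine csSup_le (hne.image _) ?_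
  rintro _ ⟨z, hz, rfl⟩
  exact h z hz

theorem aux_ex {K : Set X} (hne : K.Nonempty) (x : X) {c : ℝ} (h : c < rFar K x) :
    ∃ z ∈ K, c < ‖z - x‖ := by
  obtain ⟨_, ⟨z, hz, rfl⟩, h2⟩ := exists_lt_of_lt_csSup (hne.image _) h
  exact ⟨z, hz, h2⟩

theorem aux_lip {K : Set X} (hne : K.Nonempty) (hK : Bornology.IsBounded K) (x y : X) :
    rFar K x ≤ rFar K y + ‖x - y‖ := by
  refine aux_sup hne x fun z hz => ?_
  have h1 := aux_le hK y hz
  have h2 : ‖z - x‖ ≤ ‖z - y‖ + ‖x - y‖ := by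
    have : z - x = (z - y) - (x - y) := by abel
    rw [this]; exact norm_sub_le _ _
  linarith

theorem aux_cont {K : Set X} (hne : K.Nonempty) (hK : Bornology.IsBounded K) :
    Continuous (rFar K) := by
  have : LipschitzWith 1 (rFar K) := by
    refine LipschitzWith.of_le_add fun x y => ?_
    rw [dist_eq_norm]
    exact aux_lip hne hK x y
  exact this.continuous

variable [NormedSpace ℝ X]

theorem aux_conv {K : Set X} (hne : K.Nonempty) (hK : Bornology.IsBounded K) (x y : X) {a b : ℝ}
    (ha : 0 ≤ a) (hb : 0 ≤ b) (hab : a + b = 1) :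
    rFar K (a • x + b • y) ≤ a * rFar K x + b * rFar K y := by
  refine aux_sup hne _ fun z hz => ?_
  have h1 := aux_le hK x hz
  have h2 := aux_le hK y hz
  have : z - (a • x + b • y) = a • (z - x) + b • (z - y) := by
    have : z = (a + b) • z := by rw [hab, one_smul]
    nth_rewrite 1 [this]
    module
  rw [this]
  refine (norm_add_le _ _).trans ?_
  rw [norm_smul, norm_smul, Real.norm_of_nonneg ha, Real.norm_of_nonneg hb]
  gcongr

/-- directions along which `r_K` decreases at nearly maximal rate -/
def AFar (K : Set X) (x : X) (ε : ℝ) : Set X :=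
  {z ∈ K | ∃ s₀ > 0, ∀ s, 0 < s → s ≤ s₀ →
    rFar K (x + s • (z - x)) ≤ rFar K x - s * (rFar K x - ε)}

theorem AFar_convex {K : Set X} (hne : K.Nonempty) (hK : Bornology.IsBounded K)
    (hc : Convex ℝ K) (x : X) (ε : ℝ) : Convex ℝ (AFar K x ε) := by
  rintro z ⟨hz, s, hs, h1⟩ w ⟨hw, t, ht, h2⟩ a b ha hb hab
  refine ⟨hc hz hw ha hb hab, min s t, lt_min hs ht, fun u hu hut => ?_⟩
  have e1 := h1 u hu (hut.trans (min_le_left _ _))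
  have e2 := h2 u hu (hut.trans (min_le_right _ _))
  have key : x + u • (a • z + b • w - x)
      = a • (x + u • (z - x)) + b • (x + u • (w - x)) := by
    obtain rfl : b = 1 - a := by linarith
    module
  rw [key]
  refine (aux_conv hne hK _ _ ha hb hab).trans ?_
  have := mul_le_mul_of_nonneg_left e1 ha
  have := mul_le_mul_of_nonneg_left e2 hb
  obtain rfl : b = 1 - a := by linarith
  linarith

theorem AFar_norm {K : Set X} (hne : K.Nonempty) (hK : Bornology.IsBounded K)
    {x z : X} {ε : ℝ} (hz : z ∈ AFar K x ε) : rFar K x - ε ≤ ‖z - x‖ := by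
  obtain ⟨_, s, hs, h⟩ := hz
  have h1 := h s hs le_rfl
  have h2 := aux_lip hne hK x (x + s • (z - x))
  have h3 : ‖x - (x + s • (z - x))‖ = s * ‖z - x‖ := by
    rw [sub_add_cancel_left, norm_neg, norm_smul, Real.norm_of_nonneg hs.le]
  rw [h3] at h2
  have : s * (rFar K x - ε) ≤ s * ‖z - x‖ := by linarith
  exact le_of_mul_le_mul_left this hs

def GFar (K : Set X) (ε : ℝ) : Set X :=
  {x | ∃ s > 0, ∃ z ∈ K, rFar K (x + s • (z - x)) < rFar K x - s * (rFar K x - ε)}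

theorem GFar_open {K : Set X} (hne : K.Nonempty) (hK : Bornology.IsBounded K) (ε : ℝ) :
    IsOpen (GFar K ε) := by
  have hr := aux_cont hne hK
  have : GFar K ε = ⋃ s : ℝ, ⋃ (_ : s > 0), ⋃ z : X, ⋃ (_ : z ∈ K),
      {x | rFar K (x + s • (z - x)) < rFar K x - s * (rFar K x - ε)} := by
    ext x; simp [GFar]
  rw [this]
  refine isOpen_iUnion fun s => isOpen_iUnion fun _ => isOpen_iUnion fun z => isOpen_iUnion fun _ => ?_
  exact isOpen_lt (by fun_prop) (by fun_prop)

theorem GFar_sub {K : Set X} (hne : K.Nonempty) (hK : Bornology.IsBounded K) {ε : ℝ} {x : X}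
    (hx : x ∈ GFar K ε) : (AFar K x ε).Nonempty := by
  obtain ⟨s, hs, z, hz, h⟩ := hx
  refine ⟨z, hz, s, hs, fun t ht hts => ?_⟩
  have e : x + t • (z - x) = (1 - t / s) • x + (t / s) • (x + s • (z - x)) := by
    have : t = (t / s) * s := by field_simp
    nth_rewrite 1 [this]
    module
  have hq : t / s ≤ 1 := (div_le_one hs).2 hts
  have hq0 : 0 ≤ t / s := by positivity
  rw [e]
  refine (aux_conv hne hK _ _ (by linarith) hq0 (by ring)).trans ?_
  have h2 := mul_le_mul_of_nonneg_left h.le hq0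
  have h3 : t / s * (rFar K x - s * (rFar K x - ε))
      = t / s * rFar K x - t * (rFar K x - ε) := by field_simp
  linarith

theorem GFar_dense {K : Set X} (hne : K.Nonempty) (hK : Bornology.IsBounded K) {ε : ℝ}
    (hε : 0 < ε) : Dense (GFar K ε) := by
  rw [Metric.dense_iff]
  intro x δ hδ
  have hr0 : 0 ≤ rFar K x := by
    obtain ⟨z, hz⟩ := hne
    exact (norm_nonneg _).trans (aux_le hK x hz)
  obtain ⟨l, hl, hl2⟩ : ∃ l > 0, l * (rFar K x + 1) < δ := by
    refine ⟨δ / (2 * (rFar K x + 1)), by positivity, ?_⟩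
    have : δ / (2 * (rFar K x + 1)) * (rFar K x + 1) = δ / 2 := by field_simp
    linarith
  set s := l / (1 + l) with hsdef
  have hs : 0 < s := by positivity
  obtain ⟨z, hz, hzx⟩ := aux_ex hne x (c := rFar K x - s * ε) (by nlinarith [mul_pos hs hε])
  have hzr := aux_le hK x hz
  refine ⟨x + l • (x - z), ?_, s, hs, z, hz, ?_⟩
  · rw [mem_ball, dist_eq_norm, add_sub_cancel_left, norm_smul, Real.norm_of_nonneg hl.le,
      norm_sub_rev]
    nlinarith
  · have hsl : s * (1 + l) = l := by rw [hsdef]; field_simp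
    have e : x + l • (x - z) + s • (z - (x + l • (x - z))) = x := by
      have : x + l • (x - z) + s • (z - (x + l • (x - z)))
        = x + (l - s * (1 + l)) • (x - z) := by module
      rw [this, hsl, sub_self, zero_smul, add_zero]
    rw [e]
    have h1 := aux_le hK (x + l • (x - z)) hz
    have e2 : z - (x + l • (x - z)) = (1 + l) • (z - x) := by module
    rw [e2, norm_smul, Real.norm_of_nonneg (by positivity)] at h1
    have hs1 : (1 - s) * (1 + l) = 1 := by linarith
    have hs2 : 0 < 1 - s := by
      by_contra hcon
      push Not at hcon
      nlinarith
    have h3 := mul_le_mul_of_nonneg_left h1 hs2.le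
    rw [← mul_assoc, hs1, one_mul] at h3
    linarith

theorem aux_fip
    (hIP : ∀ B : Set (X × ℝ), (⋂ p ∈ B, closedBall p.1 p.2) = ∅ →
      ∃ s : Finset (X × ℝ), ↑s ⊆ B ∧ (⋂ p ∈ s, closedBall p.1 p.2) = ∅)
    (hM : ∀ K : Set X, IsClosed K → Bornology.IsBounded K → Convex ℝ K → Admissible K)
    (C : ℕ → Set X) (hanti : Antitone C) (h0 : ∀ n, IsClosed (C n))
    (h1 : ∀ n, Bornology.IsBounded (C n)) (h2 : ∀ n, Convex ℝ (C n)) (h3 : ∀ n, (C n).Nonempty) :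
    ∃ z, ∀ n, z ∈ C n := by
  have hne : (⋂ p ∈ {p : X × ℝ | ∃ n, C n ⊆ closedBall p.1 p.2}, closedBall p.1 p.2).Nonempty := by
    rw [Set.nonempty_iff_ne_empty]
    intro he
    obtain ⟨s, hs, hse⟩ := hIP _ he
    choose! N hN using hs
    obtain ⟨z, hz⟩ := h3 (s.sup N)
    have : z ∈ ⋂ p ∈ s, closedBall p.1 p.2 := by
      simp only [mem_iInter]
      intro p hp
      exact hN hp (hanti (Finset.le_sup hp) hz)
    rw [hse] at this
    exact this
  obtain ⟨z, hz⟩ := hne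
  refine ⟨z, fun n => ?_⟩
  rw [hM (C n) (h0 n) (h1 n) (h2 n)]
  simp only [mem_iInter, mem_setOf_eq] at hz ⊢
  exact fun p hp => hz p ⟨n, hp⟩

theorem AFar_mono {K : Set X} (x : X) {ε ε' : ℝ} (h : ε ≤ ε') : AFar K x ε ⊆ AFar K x ε' := by
  rintro z ⟨hz, s, hs, h1⟩
  refine ⟨hz, s, hs, fun t ht hts => (h1 t ht hts).trans ?_⟩
  nlinarith

theorem D_dense [CompleteSpace X]
    (hIP : ∀ B : Set (X × ℝ), (⋂ p ∈ B, closedBall p.1 p.2) = ∅ →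
      ∃ s : Finset (X × ℝ), ↑s ⊆ B ∧ (⋂ p ∈ s, closedBall p.1 p.2) = ∅)
    (hM : ∀ K : Set X, IsClosed K → Bornology.IsBounded K → Convex ℝ K → Admissible K)
    {K : Set X} (hne : K.Nonempty) (hcl : IsClosed K) (hK : Bornology.IsBounded K)
    (hc : Convex ℝ K) : Dense (DFar K) := by
  have hd : Dense (⋂ n : ℕ, GFar K (1 / ((n : ℝ) + 1))) :=
    dense_iInter_of_isOpen_nat (fun n => GFar_open hne hK _)
      (fun n => GFar_dense hne hK Nat.one_div_pos_of_nat)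
  refine hd.mono fun x hx => ?_
  rw [mem_iInter] at hx
  have hsub : ∀ ε, AFar K x ε ⊆ K := fun ε z hz => hz.1
  obtain ⟨z, hz⟩ := aux_fip hIP hM (fun n : ℕ => closure (AFar K x (1 / ((n : ℝ) + 1))))
    (fun m n hmn => closure_mono (AFar_mono x (Nat.one_div_le_one_div hmn)))
    (fun n => isClosed_closure) (fun n => (hK.subset (hsub _)).closure)
    (fun n => (AFar_convex hne hK hc x _).closure) (fun n => (GFar_sub hne hK (hx n)).closure)
  have hzK : z ∈ K := closure_minimal (hsub _) hcl (hz 0)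
  refine ⟨z, hzK, le_antisymm (aux_le hK x hzK) ?_⟩
  have hlim : Filter.Tendsto (fun n : ℕ => rFar K x - 1 / ((n : ℝ) + 1)) Filter.atTop
      (nhds (rFar K x - 0)) := tendsto_const_nhds.sub tendsto_one_div_add_atTop_nhds_zero_nat
  rw [sub_zero] at hlim
  refine le_of_tendsto' hlim fun n => ?_
  have hcl2 : IsClosed {w : X | rFar K x - 1 / ((n : ℝ) + 1) ≤ ‖w - x‖} :=
    isClosed_le (by fun_prop) (by fun_prop)
  exact closure_minimal (fun w hw => AFar_norm hne hK hw) hcl2 (hz n)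

theorem aux_far_sub {K : Set X} : farPoints K ⊆ K := by
  intro z hz
  simp only [farPoints, mem_iUnion] at hz
  obtain ⟨x, _, hz⟩ := hz
  exact hz.1

theorem aux_fwd [CompleteSpace X]
    (hIP : ∀ B : Set (X × ℝ), (⋂ p ∈ B, closedBall p.1 p.2) = ∅ →
      ∃ s : Finset (X × ℝ), ↑s ⊆ B ∧ (⋂ p ∈ s, closedBall p.1 p.2) = ∅)
    (hM : ∀ K : Set X, IsClosed K → Bornology.IsBounded K → Convex ℝ K → Admissible K)
    {K : Set X} (hne : K.Nonempty) (hcl : IsClosed K) (hK : Bornology.IsBounded K)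
    (hc : Convex ℝ K) : K = closure (convexHull ℝ (farPoints K)) := by
  have hF : closure (convexHull ℝ (farPoints K)) ⊆ K :=
    closure_minimal (convexHull_min aux_far_sub hc) hcl
  refine Subset.antisymm (fun k hk => ?_) hF
  rw [hM _ isClosed_closure (hK.subset hF) (convex_convexHull ℝ _).closure]
  simp only [mem_iInter, mem_setOf_eq]
  rintro ⟨x₀, ρ⟩ hsub
  simp only at hsub ⊢
  by_contra hkn
  rw [mem_closedBall, dist_eq_norm, not_le] at hkn
  have h1 := aux_le hK x₀ hk
  obtain ⟨x, hxD, hx⟩ := (D_dense hIP hM hne hcl hK hc).exists_dist_lt x₀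
    (ε := (rFar K x₀ - ρ) / 2) (by linarith)
  obtain ⟨z, hz⟩ := hxD
  have hzb : z ∈ farPoints K := by
    simp only [farPoints, mem_iUnion]
    exact ⟨x, ⟨z, hz⟩, hz⟩
  have h2 := hsub (subset_closure (subset_convexHull ℝ _ hzb))
  rw [mem_closedBall] at h2
  have h3 := aux_lip hne hK x₀ x
  rw [← hz.2, ← dist_eq_norm, ← dist_eq_norm] at h3
  have h4 := dist_triangle z x₀ x
  linarith

theorem aux_bwd
    (hB : ∀ K : Set X, K.Nonempty → IsClosed K → Bornology.IsBounded K → Convex ℝ K →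
      K = closure (convexHull ℝ (farPoints K)))
    {K : Set X} (hcl : IsClosed K) (hK : Bornology.IsBounded K)
    (hc : Convex ℝ K) : Admissible K := by
  refine Subset.antisymm (fun k hk => ?_) (fun x₀ hx₀ => ?_)
  · simp only [mem_iInter, mem_setOf_eq]
    exact fun p hp => hp hk
  simp only [mem_iInter, mem_setOf_eq] at hx₀
  by_contra hxK
  rcases K.eq_empty_or_nonempty with rfl | hne
  · have := hx₀ (x₀, -1) (empty_subset _)
    simp at this
  obtain ⟨k₀, hk₀⟩ := hne
  have hk₀x : k₀ ≠ x₀ := fun h => hxK (h ▸ hk₀)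
  have : Nontrivial X := ⟨⟨k₀, x₀, hk₀x⟩⟩
  obtain ⟨f, u, hfu, hux⟩ := geometric_hahn_banach_closed_point hc hcl hxK
  obtain ⟨ε, hε, hεf⟩ : ∃ ε > 0, ‖f‖ * ε < f x₀ - u := by
    refine ⟨(f x₀ - u) / (‖f‖ + 1), div_pos (by linarith) (by positivity), ?_⟩
    rw [mul_div_assoc', div_lt_iff₀ (by positivity)]
    nlinarith [norm_nonneg f]
  set a := u + ‖f‖ * ε with ha
  have hax : a < f x₀ := by linarith
  set K1 := insert x₀ (K + closedBall 0 ε) with hK1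
  have hK1b : Bornology.IsBounded K1 := (hK.add isBounded_closedBall).insert x₀
  set K' := closure (convexHull ℝ K1) with hK'
  have hK'b : Bornology.IsBounded K' := (isBounded_convexHull.2 hK1b).closure
  have hsubK' : K1 ⊆ K' := (subset_convexHull ℝ _).trans subset_closure
  have hx₀' : x₀ ∈ K' := hsubK' (mem_insert _ _)
  have heq := hB K' ⟨x₀, hx₀'⟩ isClosed_closure hK'b (convex_convexHull ℝ _).closure
  have hfar : farPoints K' ⊆ {y | f y ≤ a} := by
    intro z hz
    simp only [farPoints, mem_iUnion] at hz
    obtain ⟨x, _, hzK, hzr⟩ := hz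
    set R := rFar K' x
    have hKR : K ⊆ closedBall x (R - ε) := by
      intro k hk
      obtain ⟨v, hv, hv2⟩ : ∃ v : X, ‖v‖ = ε ∧ ‖k - x + v‖ = ‖k - x‖ + ε := by
        by_cases hkx : k - x = 0
        · obtain ⟨v, hv⟩ := exists_norm_eq X hε.le
          exact ⟨v, hv, by simp [hkx, hv]⟩
        · have hp : 0 < ‖k - x‖ := norm_pos_iff.2 hkx
          refine ⟨(ε / ‖k - x‖) • (k - x), ?_, ?_⟩
          · rw [norm_smul, Real.norm_of_nonneg (by positivity)]; field_simp
          · have : k - x + (ε / ‖k - x‖) • (k - x) = (1 + ε / ‖k - x‖) • (k - x) := by module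
            rw [this, norm_smul, Real.norm_of_nonneg (by positivity)]; field_simp
      have hm : k + v ∈ K' := hsubK' (mem_insert_of_mem _ (add_mem_add hk (by simp [hv])))
      have h1 := aux_le hK'b x hm
      rw [add_sub_right_comm, hv2] at h1
      rw [mem_closedBall, dist_eq_norm]
      linarith
    have hxR := hx₀ (x, R - ε) hKR
    simp only [mem_closedBall, dist_eq_norm] at hxR
    have hS : K' ⊆ {y | ε * (f y - a) + (f x₀ - a) * ‖y - x‖ ≤ (f x₀ - a) * R} := by
      refine closure_minimal (convexHull_min ?_ ?_) (isClosed_le (by fun_prop) (by fun_prop))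
      · rintro y (rfl | hy)
        · simp only [mem_setOf_eq]
          nlinarith
        · have hyR := aux_le hK'b x (hsubK' (mem_insert_of_mem _ hy))
          obtain ⟨k, hk, v, hv, rfl⟩ := hy
          have h1 := hfu k hk
          have h2 : f v ≤ ‖f‖ * ε := by
            refine (le_abs_self _).trans ((f.le_opNorm v).trans ?_)
            gcongr
            simpa using hv
          have h3 : f (k + v) ≤ a := by rw [map_add]; linarith
          have h4 := mul_le_mul_of_nonneg_left hyR (sub_pos.2 hax).le
          have h5 : ε * (f (k + v) - a) ≤ 0 := mul_nonpos_of_nonneg_of_nonpos hε.le (by linarith)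
          simp only [mem_setOf_eq]
          linarith
      · intro y hy w hw s t hs ht hst
        simp only [mem_setOf_eq] at hy hw ⊢
        have e : s • y + t • w - x = s • (y - x) + t • (w - x) := by
          obtain rfl : t = 1 - s := by linarith
          module
        have h1 : ‖s • y + t • w - x‖ ≤ s * ‖y - x‖ + t * ‖w - x‖ := by
          rw [e]
          refine (norm_add_le _ _).trans ?_
          rw [norm_smul, norm_smul, Real.norm_of_nonneg hs, Real.norm_of_nonneg ht]
        have h2 := mul_le_mul_of_nonneg_left h1 (sub_pos.2 hax).le
        have h3 := mul_le_mul_of_nonneg_left hy hs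
        have h4 := mul_le_mul_of_nonneg_left hw ht
        simp only [map_add, map_smul, smul_eq_mul]
        obtain rfl : t = 1 - s := by linarith
        linarith
    have h1 := hS hzK
    simp only [mem_setOf_eq, hzr] at h1 ⊢
    have h2 : ε * (f z - a) ≤ 0 := by linarith
    by_contra h3
    push Not at h3
    nlinarith
  have hfin : K' ⊆ {y | f y ≤ a} := by
    rw [heq]
    refine closure_minimal (convexHull_min hfar ?_) (isClosed_le (by fun_prop) (by fun_prop))
    exact convex_halfSpace_le f.toLinearMap.isLinear a
  have := hfin hx₀'
  simp only [mem_setOf_eq] at this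
  linarith

end helpers

/-- Corollary IP: if `X` has the IP_{f,∞}, then `X` has the MIP iff every nonempty closed
bounded convex set is the closed convex hull of its farthest points. -/
theorem stmt_10 {X : Type*} [NormedAddCommGroup X] [NormedSpace ℝ X] [CompleteSpace X]
    (hIP : ∀ B : Set (X × ℝ), (⋂ p ∈ B, closedBall p.1 p.2) = ∅ →
      ∃ s : Finset (X × ℝ), ↑s ⊆ B ∧ (⋂ p ∈ s, closedBall p.1 p.2) = ∅) :
    (∀ K : Set X, IsClosed K → Bornology.IsBounded K → Convex ℝ K → Admissible K) ↔
    (∀ K : Set X, K.Nonempty → IsClosed K → Bornology.IsBounded K → Convex ℝ K →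
      K = closure (convexHull ℝ (farPoints K))) := by
  exact ⟨fun hM K hne hcl hK hc => aux_fwd hIP hM hne hcl hK hc,
    fun hB K hcl hK hc => aux_bwd hB hcl hK hc⟩
end

section
/- Let X be a real Banach space in which every weakly compact convex set is admissible (i.e., is the intersection of all closed balls containing it). Then every nonempty weakly compact convex set in X is the norm-closed convex hull of its set of farthest points. -/
open Metric Set Pointwise

section helpers17
variable {X : Type*} [NormedAddCommGroup X]

lemma le_rFar17 {K : Set X} (hb : Bornology.IsBounded K) (x : X) {z : X} (hz : z ∈ K) :
    ‖z - x‖ ≤ rFar K x := by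
  obtain ⟨R, hR⟩ := hb.subset_closedBall x
  refine le_csSup ⟨R, ?_⟩ ⟨z, hz, rfl⟩
  rintro _ ⟨w, hw, rfl⟩
  have := hR hw
  rwa [mem_closedBall, dist_eq_norm] at this

lemma rFar_le17 {K : Set X} (hne : K.Nonempty) (x : X) {c : ℝ} (hc : ∀ z ∈ K, ‖z - x‖ ≤ c) :
    rFar K x ≤ c := by
  refine csSup_le (hne.image _) ?_
  rintro _ ⟨w, hw, rfl⟩
  exact hc w hw

lemma rFar_lip17 {K : Set X} (hne : K.Nonempty) (hb : Bornology.IsBounded K) (x y : X) :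
    rFar K x ≤ rFar K y + ‖x - y‖ := by
  refine rFar_le17 hne x fun z hz => ?_
  have h1 := le_rFar17 hb y hz
  have h2 := norm_sub_le (z - y) (x - y)
  rw [sub_sub_sub_cancel_right] at h2
  linarith

variable [NormedSpace ℝ X]

lemma subgrad17 {K : Set X} (hne : K.Nonempty) (hb : Bornology.IsBounded K) (x : X) :
    ∃ f : X →L[ℝ] ℝ, ∀ y, rFar K x + f (y - x) ≤ rFar K y := by
  have hcont : Continuous (rFar K) := by
    refine LipschitzWith.continuous (K := 1) (LipschitzWith.of_le_add fun a b => ?_)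
    rw [dist_eq_norm]; exact rFar_lip17 hne hb a b
  have hopen : IsOpen {p : X × ℝ | rFar K p.1 < p.2} :=
    isOpen_lt (hcont.comp continuous_fst) continuous_snd
  have hconv : Convex ℝ {p : X × ℝ | rFar K p.1 < p.2} := by
    rintro ⟨u, s⟩ hu ⟨v, t⟩ hv a b ha hbb hab
    simp only [mem_setOf_eq] at hu hv
    simp only [mem_setOf_eq, Prod.smul_mk, Prod.mk_add_mk, smul_eq_mul]
    have h1 : rFar K (a • u + b • v) ≤ a * rFar K u + b * rFar K v := by
      refine rFar_le17 hne _ fun z hz => ?_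
      have e : z - (a • u + b • v) = a • (z - u) + b • (z - v) := by
        have : z = a • z + b • z := by rw [← add_smul, hab, one_smul]
        nth_rewrite 1 [this]
        simp only [smul_sub]; abel
      rw [e]
      refine (norm_add_le _ _).trans ?_
      rw [norm_smul, norm_smul, Real.norm_of_nonneg ha, Real.norm_of_nonneg hbb]
      gcongr
      · exact le_rFar17 hb u hz
      · exact le_rFar17 hb v hz
    rcases eq_or_lt_of_le ha with h0 | h0
    · have : b = 1 := by linarith
      subst this; subst h0; linarith
    · have := mul_lt_mul_of_pos_left hu h0
      have := mul_le_mul_of_nonneg_left hv.le hbb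
      linarith
  obtain ⟨F, hF⟩ := geometric_hahn_banach_open_point hconv hopen
    (x := (x, rFar K x)) (by simp)
  let g : X →L[ℝ] ℝ := F.comp (ContinuousLinearMap.inl ℝ X ℝ)
  let c : ℝ := F (0, 1)
  have hdec : ∀ y t, F (y, t) = g y + t * c := by
    intro y t
    have : ((y, t) : X × ℝ) = (y, 0) + t • ((0 : X), (1 : ℝ)) := by simp
    rw [this, map_add, map_smul]; rfl
  have hlt : ∀ y t, rFar K y < t → g y + t * c < g x + rFar K x * c := by
    intro y t ht
    rw [← hdec, ← hdec]; exact hF _ ht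
  have hc : c < 0 := by
    have := hlt x (rFar K x + 1) (by linarith)
    linarith
  refine ⟨(-c⁻¹) • g, fun y => ?_⟩
  have key : g y + rFar K y * c ≤ g x + rFar K x * c := by
    refine le_of_forall_pos_le_add fun e he => ?_
    have h1 := hlt y (rFar K y + e / (-c)) (by
      have : 0 < e / (-c) := div_pos he (by linarith)
      linarith)
    have h2 : e / (-c) * c = -e := by
      rw [div_neg, neg_mul, div_mul_cancel₀ _ hc.ne]
    rw [add_mul, h2] at h1
    linarith
  have e1 : ((-c⁻¹) • g) (y - x) = (g x - g y) / c := by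
    simp only [ContinuousLinearMap.smul_apply, map_sub, smul_eq_mul]; ring
  rw [e1]
  have : (g x - g y) / c ≤ rFar K y - rFar K x := by
    rw [div_le_iff_of_neg hc]; linarith
  linarith

lemma dense_DFar17 [CompleteSpace X] {K : Set X} (hne : K.Nonempty) (hb : Bornology.IsBounded K)
    (hatt : ∀ f : X →L[ℝ] ℝ, ∃ z ∈ K, ∀ w ∈ K, f z ≤ f w) : Dense (DFar K) := by
  have hnorm : ∀ (x : X) (f : X →L[ℝ] ℝ), (∀ y, rFar K x + f (y - x) ≤ rFar K y) →
      ∀ v, f v ≤ ‖v‖ := by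
    intro x f hf v
    have h1 := hf (x + v)
    have h2 := rFar_lip17 hne hb (x + v) x
    rw [add_sub_cancel_left] at h1 h2
    linarith
  let F : ℕ → Set X := fun n => {x | ∃ f : X →L[ℝ] ℝ, (∀ y, rFar K x + f (y - x) ≤ rFar K y) ∧
    ∀ z ∈ K, f (x - z) ≤ rFar K x - 1 / ((n : ℝ) + 1)}
  have hF : ∀ n, Dense (closure (F n))ᶜ := by
    intro n
    rw [← interior_eq_empty_iff_dense_compl]
    by_contra hcon
    obtain ⟨x0, hx0⟩ := Set.nonempty_iff_ne_empty.mpr hcon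
    rw [mem_interior_iff_mem_nhds, Metric.mem_nhds_iff] at hx0
    obtain ⟨ρ, hρ, hball⟩ := hx0
    have hr0 : 0 ≤ rFar K x0 := by
      obtain ⟨z, hz⟩ := hne
      exact (norm_nonneg _).trans (le_rFar17 hb x0 hz)
    set r0 := rFar K x0 with hr0d
    obtain ⟨κ, hκd⟩ : ∃ κ : ℝ, κ = 1 / ((n : ℝ) + 1) := ⟨_, rfl⟩
    have hκ : 0 < κ := by rw [hκd]; positivity
    obtain ⟨l, hl, hlr⟩ : ∃ l : ℝ, 0 < l ∧ l * r0 < ρ := by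
      refine ⟨ρ / (r0 + 1), by positivity, ?_⟩
      rw [div_mul_eq_mul_div, div_lt_iff₀ (by positivity)]
      nlinarith
    obtain ⟨ε, hε, hεe⟩ : ∃ ε : ℝ, 0 < ε ∧ 8 * ((1 + l) * ε) = l * κ := by
      refine ⟨l * κ / (8 * (1 + l)), by positivity, ?_⟩
      field_simp
    obtain ⟨z0, hz0, hz0r⟩ : ∃ z ∈ K, r0 - ε < ‖z - x0‖ := by
      by_contra! hno
      have := rFar_le17 hne x0 hno
      linarith
    have hz0le := le_rFar17 hb x0 hz0
    let x1 := x0 + l • (x0 - z0)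
    have hx1 : x1 ∈ ball x0 ρ := by
      rw [mem_ball, dist_eq_norm]
      simp only [x1, add_sub_cancel_left]
      rw [norm_smul, Real.norm_of_nonneg hl.le, norm_sub_rev]
      exact (mul_le_mul_of_nonneg_left hz0le hl.le).trans_lt hlr
    obtain ⟨x2, ⟨f, hf, hfz⟩, hx2⟩ := Metric.mem_closure_iff.mp (hball hx1) ε hε
    have hfn := hnorm x2 f hf
    rw [dist_eq_norm] at hx2
    rw [← hκd] at hfz
    have a1 : (1 + l) * ‖z0 - x0‖ ≤ rFar K x1 := by
      refine le_trans (le_of_eq ?_) (le_rFar17 hb x1 hz0)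
      have : z0 - x1 = (1 + l) • (z0 - x0) := by
        simp only [x1]; module
      rw [this, norm_smul, Real.norm_of_nonneg (by positivity)]
    have a2 := hf x0
    have a3 := hfz z0 hz0
    have a4 := rFar_lip17 hne hb x1 x2
    have a5 := rFar_lip17 hne hb x2 x1
    have a6 := hfn (x1 - x2)
    have a7 := hfn (x2 - x1)
    rw [norm_sub_rev] at a5 a7
    have e1 : f (x1) = f x0 + l * (f x0 - f z0) := by simp [x1]
    simp only [map_sub] at a2 a3 a6 a7
    have b1 : f x1 - f z0 ≤ rFar K x1 + 2 * ε - κ := by linarith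
    have b2 : rFar K x1 - 2 * ε + (f x0 - f x1) ≤ r0 := by linarith
    have b3 : (1 + l) * (r0 - ε) ≤ rFar K x1 :=
      (mul_le_mul_of_nonneg_left hz0r.le (by positivity)).trans a1
    have b4 := mul_le_mul_of_nonneg_left b1 hl.le
    have b5 := mul_le_mul_of_nonneg_left b2 (by positivity : 0 ≤ 1 + l)
    have b6 : 0 < l * ε := by positivity
    rw [e1] at b4 b5
    have b7 : 0 < l * κ := by positivity
    nlinarith
  have hd := dense_iInter_of_isOpen_nat (fun n => (isClosed_closure (s := F n)).isOpen_compl) hF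
  refine hd.mono fun x hx => ?_
  rw [mem_iInter] at hx
  obtain ⟨f, hf⟩ := subgrad17 hne hb x
  obtain ⟨z, hz, hzm⟩ := hatt f
  refine ⟨z, hz, le_antisymm (le_rFar17 hb x hz) ?_⟩
  by_contra! hlt
  obtain ⟨n, hn⟩ := exists_nat_one_div_lt (sub_pos.mpr hlt)
  refine hx n (subset_closure ⟨f, hf, fun w hw => ?_⟩)
  have h1 := hnorm x f hf (x - z)
  have h2 := hzm w hw
  rw [norm_sub_rev] at h1
  simp only [map_sub] at h1 ⊢
  linarith

lemma weak_cont17 (f : X →L[ℝ] ℝ) : @Continuous X ℝ (weakTop X) _ f := by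

  have h1 : Continuous (fun u : (X →L[ℝ] ℝ) → ℝ => u f) := continuous_apply f
  exact @Continuous.comp X ((X →L[ℝ] ℝ) → ℝ) ℝ (weakTop X) _ _ _ _ h1 continuous_induced_dom

lemma weak_closed17 {C : Set X} (hc : IsClosed C) (hv : Convex ℝ C) :
    @IsClosed X (weakTop X) C := by
  rw [← @isOpen_compl_iff X C (weakTop X)]
  rw [@isOpen_iff_forall_mem_open X (weakTop X)]
  intro x hx
  obtain ⟨f, u, hfu, hux⟩ := geometric_hahn_banach_closed_point hv hc hx
  refine ⟨f ⁻¹' Ioi u, fun y hy hyC => ?_, @IsOpen.preimage X ℝ (weakTop X) _ _ (weak_cont17 f) _ isOpen_Ioi, hux⟩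
  exact lt_asymm (hfu y hyC) hy

lemma norm_closed17 {K : Set X} (hK : @IsCompact X (weakTop X) K) : IsClosed K := by
  rw [← isOpen_compl_iff, Metric.isOpen_iff]
  by_contra! hcon
  obtain ⟨x, hx, hxb⟩ := hcon
  have h2 : @T2Space X (weakTop X) := by
    refine @T2Space.of_injective_continuous X (((X →L[ℝ] ℝ)) → ℝ) (weakTop X) _ _
      (fun x => fun f : X →L[ℝ] ℝ => f x) ?_ continuous_induced_dom
    intro a b hab
    by_contra hne
    obtain ⟨f, hf⟩ := geometric_hahn_banach_point_point (E := X) hne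
    exact absurd (congrFun hab f) hf.ne
  have hcl : @IsClosed X (weakTop X) K := @IsCompact.isClosed X (weakTop X) h2 K hK
  have hle : (inferInstance : TopologicalSpace X) ≤ weakTop X := by
    rw [weakTop, ← continuous_iff_le_induced]
    exact continuous_pi fun f => f.continuous
  have : IsClosed K := hcl.mono hle
  obtain ⟨ε, hε, hs⟩ := Metric.isOpen_iff.mp this.isOpen_compl x hx
  exact hxb ε hε hs

lemma weak_bdd17 {K : Set X} (hK : @IsCompact X (weakTop X) K) : Bornology.IsBounded K := by
  have hpt : ∀ f : X →L[ℝ] ℝ, ∃ C, ∀ z : K, ‖NormedSpace.inclusionInDoubleDual ℝ X z f‖ ≤ C := by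
    intro f
    have h1 : IsCompact (f '' K) := @IsCompact.image X ℝ (weakTop X) _ K f hK (weak_cont17 f)
    obtain ⟨C, hC⟩ := h1.isBounded.exists_norm_le
    exact ⟨C, fun z => by simpa using hC _ ⟨z, z.2, rfl⟩⟩
  obtain ⟨C, hC⟩ := banach_steinhaus hpt
  refine isBounded_iff_forall_norm_le.mpr ⟨C, fun z hz => ?_⟩
  have h1 := hC ⟨z, hz⟩
  have h2 := (NormedSpace.inclusionInDoubleDualLi (E := X) ℝ).norm_map z
  rw [← h2]; exact h1

end helpers17

/-- If every weakly compact convex set in `X` is admissible, then every nonempty weakly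
compact convex set is the closed convex hull of its farthest points. -/
theorem stmt_17 {X : Type*} [NormedAddCommGroup X] [NormedSpace ℝ X] [CompleteSpace X]
    (h : ∀ K : Set X, @IsCompact X (weakTop X) K → Convex ℝ K → Admissible K) :
    ∀ K : Set X, @IsCompact X (weakTop X) K → Convex ℝ K → K.Nonempty →
      K = closure (convexHull ℝ (farPoints K)) := by
  intro K hK hconv hne
  have hb := weak_bdd17 hK
  have hcl := norm_closed17 hK
  have hsub : closure (convexHull ℝ (farPoints K)) ⊆ K := by
    refine closure_minimal (convexHull_min ?_ hconv) hcl
    intro z hz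
    simp only [farPoints, mem_iUnion] at hz
    obtain ⟨x, -, hzx⟩ := hz
    exact hzx.1
  refine Subset.antisymm ?_ hsub
  have hcv : Convex ℝ (closure (convexHull ℝ (farPoints K))) := (convex_convexHull ℝ _).closure
  have hcomp : @IsCompact X (weakTop X) (closure (convexHull ℝ (farPoints K))) :=
    @IsCompact.of_isClosed_subset X (weakTop X) _ _ hK (weak_closed17 isClosed_closure hcv) hsub
  have hadm := h _ hcomp hcv
  have hdense : Dense (DFar K) := by
    refine dense_DFar17 hne hb fun f => ?_
    obtain ⟨z, hz, hm⟩ := @IsCompact.exists_isMinOn ℝ X _ _ (weakTop X) _ K hK hne f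
      (@Continuous.continuousOn X ℝ (weakTop X) _ f K (weak_cont17 f))
    exact ⟨z, hz, fun w hw => hm hw⟩
  intro z hz
  rw [hadm]
  simp only [mem_iInter, mem_setOf_eq]
  rintro ⟨x, r⟩ hxr
  dsimp only at hxr ⊢
  rw [mem_closedBall, dist_eq_norm]
  refine le_of_forall_pos_le_add fun e he => ?_
  obtain ⟨y, hy, hxy⟩ := hdense.exists_dist_lt x (half_pos he)
  obtain ⟨w, hw⟩ := id hy
  have hwb : w ∈ farPoints K := by
    simp only [farPoints, mem_iUnion]
    exact ⟨y, hy, hw⟩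
  have h1 := hxr (subset_closure (subset_convexHull ℝ _ hwb))
  rw [mem_closedBall, dist_eq_norm] at h1
  rw [dist_eq_norm] at hxy
  have h2 := hw.2
  have h3 := le_rFar17 hb y hz
  have h4 := norm_sub_le_norm_sub_add_norm_sub z y x
  have h5 := norm_sub_le_norm_sub_add_norm_sub w x y
  rw [norm_sub_rev y x] at h4
  linarith
end
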